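/- Let G' be a digraph on n vertices such that every vertex set S with βn/5 ≤ |S| ≤ n/2 satisfies |Out_{G'}(S)| ≥ βn/150, and similarly every such S satisfies |In_{G'}(S)| ≥ βn/150. Then for any two vertex sets V_a, V_b, each of size at least βn/5, there is a directed path in G' from a vertex of V_a to a vertex of V_b of length at most 300/β + 1. -/

import Mathlib

open Finset

/-!
While the set reachable from a large set `A` contains at most half of the vertices, each further
step adds at least `c` new ones, so about `|V| / (2c)` steps reach more than half. The same holds
backwards from a large set `B`. Hence the two reachable sets meet, and a walk through a common
vertex, with its cycles cut out, is the required path.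
-/

section

open scoped SetRel

variable {V : Type*} {R : SetRel V V} {a b c : ℝ} {A B S : Set V} {m : ℕ}

/-- Vertex expansion of the digraph `R` on sets whose size lies in `[a, b]`: such a set has at least
`c` out-neighbours outside itself. Expansion along in-neighbours is expansion of `R.inv`. Sizes are
`Set.ncard`, so the notion is meant for finite `V`. -/
def ExpandsBetween (R : SetRel V V) (a b c : ℝ) : Prop :=
  ∀ S : Set V, a ≤ S.ncard → S.ncard ≤ b → c ≤ (R.image S \ S).ncard

/-- The ball of radius `m` around `S`: the vertices at which some walk of length at most `m`
starting in `S` ends. Walks are encoded as `RelSeries R`. -/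
def reachableWithin (R : SetRel V V) (S : Set V) (m : ℕ) : Set V :=
  {v | ∃ p : RelSeries R, p.length ≤ m ∧ p.head ∈ S ∧ p.last = v}

-- The decidability argument is implicit so that it unifies with the instance occurring in `h`:
-- instance search does not see through `SetRel.inv`.
theorem expandsBetween_of_finset [Fintype V]
    {_ : ∀ S : Finset V, DecidablePred fun v => v ∉ S ∧ ∃ u ∈ S, u ~[R] v}
    (h : ∀ S : Finset V, a ≤ #S → #S ≤ b → c ≤ #{v | v ∉ S ∧ ∃ u ∈ S, u ~[R] v}) :
    ExpandsBetween R a b c := by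
  intro S ha hb
  lift S to Finset V using S.toFinite
  rw [Set.ncard_coe_finset] at ha hb
  have hboundary : R.image S \ S = ({v | v ∉ S ∧ ∃ u ∈ S, u ~[R] v} : Finset V) := by
    ext v
    simp [and_comm]
  rw [hboundary, Set.ncard_coe_finset]
  exact h S ha hb

theorem subset_reachableWithin : S ⊆ reachableWithin R S m :=
  fun v hv => ⟨.singleton R v, m.zero_le, hv, rfl⟩

theorem reachableWithin_subset_succ : reachableWithin R S m ⊆ reachableWithin R S (m + 1) :=
  fun _ ⟨p, hp, hhead, hlast⟩ => ⟨p, hp.trans m.le_succ, hhead, hlast⟩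

theorem image_reachableWithin_subset :
    R.image (reachableWithin R S m) ⊆ reachableWithin R S (m + 1) := by
  rintro v ⟨_, ⟨p, hp, hhead, rfl⟩, hv⟩
  exact ⟨p.snoc v hv, by simpa using hp, by simpa using hhead, p.last_snoc v hv⟩

theorem ExpandsBetween.ncard_add_le_ncard_reachableWithin_succ [Finite V]
    (h : ExpandsBetween R a b c) (ha : a ≤ S.ncard) (hb : (reachableWithin R S m).ncard ≤ b) :
    (reachableWithin R S m).ncard + c ≤ (reachableWithin R S (m + 1)).ncard := by
  set T := reachableWithin R S m
  have haT : a ≤ T.ncard := ha.trans (mod_cast Set.ncard_le_ncard subset_reachableWithin)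
  calc (T.ncard : ℝ) + c ≤ T.ncard + (R.image T \ T).ncard := by gcongr; exact h T haT hb
    _ = (T ∪ R.image T \ T).ncard := by
      rw [Set.ncard_union_eq Set.disjoint_sdiff_right]
      norm_cast
    _ ≤ (reachableWithin R S (m + 1)).ncard := by
      gcongr
      · exact Set.toFinite _
      · exact Set.union_subset reachableWithin_subset_succ
          (Set.sdiff_subset.trans image_reachableWithin_subset)

theorem ExpandsBetween.lt_ncard_reachableWithin [Finite V] (h : ExpandsBetween R a b c)
    (ha : a ≤ S.ncard) (hm : b < S.ncard + m * c) : b < (reachableWithin R S m).ncard := by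
  suffices hgrowth : ∀ k : ℕ, b < (reachableWithin R S k).ncard ∨
      S.ncard + k * c ≤ (reachableWithin R S k).ncard from
    (hgrowth m).elim id hm.trans_le
  intro k
  induction k with
  | zero => exact .inr (by simpa using Set.ncard_le_ncard subset_reachableWithin)
  | succ k ih =>
    rcases lt_or_ge b (reachableWithin R S k).ncard with hlarge | hsmall
    · exact .inl (hlarge.trans_le (mod_cast Set.ncard_le_ncard reachableWithin_subset_succ))
    · have hstep := h.ncard_add_le_ncard_reachableWithin_succ ha hsmall
      push_cast
      exact .inr (by linarith [ih.resolve_left hsmall.not_gt])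

theorem exists_shorter_relSeries_of_not_injective (p : RelSeries R)
    (hp : ¬ Function.Injective p) :
    ∃ q : RelSeries R, q.length < p.length ∧ q.head = p.head ∧ q.last = p.last := by
  obtain ⟨i, j, heq, hne⟩ := Function.not_injective_iff.mp hp
  wlog hlt : i < j generalizing i j
  · exact this j i heq.symm hne.symm (hne.lt_or_gt.resolve_left hlt)
  have hconnect : (p.take i).last = (p.drop j).head := by simpa using heq
  refine ⟨(p.take i).smash (p.drop j) hconnect, ?_, by simp, by simp⟩
  rw [RelSeries.smash_length, RelSeries.take_length, RelSeries.drop_length]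
  lia

theorem exists_injective_relSeries (p : RelSeries R) :
    ∃ q : RelSeries R, q.length ≤ p.length ∧ Function.Injective q ∧
      q.head = p.head ∧ q.last = p.last := by
  induction hk : p.length using Nat.strong_induction_on generalizing p with
  | _ k ih =>
    by_cases hp : Function.Injective p
    · exact ⟨p, hk.le, hp, rfl, rfl⟩
    · obtain ⟨q, hqp, hhead, hlast⟩ := exists_shorter_relSeries_of_not_injective p hp
      obtain ⟨r, hr, hinj, hrhead, hrlast⟩ := ih q.length (hk ▸ hqp) q rfl
      exact ⟨r, hr.trans (hk ▸ hqp.le), hinj, hrhead.trans hhead, hrlast.trans hlast⟩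

theorem exists_injective_relSeries_of_inter_nonempty {l : ℕ}
    (h : (reachableWithin R A l ∩ reachableWithin R.inv B m).Nonempty) :
    ∃ p : RelSeries R, p.length ≤ l + m ∧ Function.Injective p ∧ p.head ∈ A ∧ p.last ∈ B := by
  obtain ⟨w, ⟨p, hp, hpA, hpw⟩, q, hq, hqB, hqw⟩ := h
  obtain ⟨q', hq', hq'w, hq'B⟩ : ∃ q' : RelSeries R, q'.length ≤ m ∧ q'.head = w ∧ q'.last ∈ B :=
    ⟨q.reverse, hq, q.head_reverse.trans hqw, q.last_reverse.symm ▸ hqB⟩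
  obtain ⟨r, hr, hinj, hhead, hlast⟩ :=
    exists_injective_relSeries (p.smash q' (hpw.trans hq'w.symm))
  refine ⟨r, hr.trans (Nat.add_le_add hp hq'), hinj, ?_, ?_⟩
  · rwa [hhead, RelSeries.head_smash]
  · rwa [hlast, RelSeries.last_smash]

theorem short_path_between_large_sets_general [Finite V] (hc : 0 < c)
    (hout : ExpandsBetween R a (Nat.card V / 2) c)
    (hin : ExpandsBetween R.inv a (Nat.card V / 2) c)
    (hA : a ≤ A.ncard) (hB : a ≤ B.ncard) :
    ∃ p : RelSeries R, p.length ≤ Nat.card V / c + 2 ∧ Function.Injective p ∧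
      p.head ∈ A ∧ p.last ∈ B := by
  set N : ℝ := (Nat.card V : ℝ)
  set m := ⌊N / 2 / c⌋₊ + 1
  have hm : N / 2 < m * c := (div_lt_iff₀ hc).mp (mod_cast Nat.lt_floor_add_one (N / 2 / c))
  have hforward : N / 2 < (reachableWithin R A m).ncard :=
    hout.lt_ncard_reachableWithin hA (by linarith [(Nat.cast_nonneg A.ncard : (0 : ℝ) ≤ _)])
  have hbackward : N / 2 < (reachableWithin R.inv B m).ncard :=
    hin.lt_ncard_reachableWithin hB (by linarith [(Nat.cast_nonneg B.ncard : (0 : ℝ) ≤ _)])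
  have hmeet : (reachableWithin R A m ∩ reachableWithin R.inv B m).Nonempty := by
    apply Set.nonempty_inter_of_lt_ncard_add_ncard
    rify
    linarith
  obtain ⟨p, hp, hpath⟩ := exists_injective_relSeries_of_inter_nonempty hmeet
  refine ⟨p, ?_, hpath⟩
  calc (p.length : ℝ) ≤ m + m := mod_cast hp
    _ = 2 * ⌊N / 2 / c⌋₊ + 2 := by push_cast [m]; ring
    _ ≤ 2 * (N / 2 / c) + 2 := by gcongr; exact Nat.floor_le (by positivity)
    _ = N / c + 2 := by ring

end

/-- If in a digraph every `S` with `βn/5 ≤ |S| ≤ n/2` has both out- and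
in-neighbourhood of size at least `βn/150`, then between any two sets `V_a, V_b`
of size at least `βn/5` there is a directed path of length at most `300/β + 1`. -/
theorem short_path_between_large_sets {V : Type*} [Fintype V] [DecidableEq V]
    (E : Finset (V × V)) (n : ℕ) (hn : Fintype.card V = n) (hn0 : 0 < n)
    (β : ℝ) (hβ0 : 0 < β) (hβ1 : β ≤ 1)
    (hout : ∀ S : Finset V, β * n / 5 ≤ (S.card : ℝ) → (S.card : ℝ) ≤ n / 2 →
      β * n / 150 ≤
        ((Finset.univ.filter (fun v => v ∉ S ∧ ∃ u ∈ S, (u, v) ∈ E)).card : ℝ))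
    (hin : ∀ S : Finset V, β * n / 5 ≤ (S.card : ℝ) → (S.card : ℝ) ≤ n / 2 →
      β * n / 150 ≤
        ((Finset.univ.filter (fun v => v ∉ S ∧ ∃ u ∈ S, (v, u) ∈ E)).card : ℝ))
    (Va Vb : Finset V) (hVa : β * n / 5 ≤ (Va.card : ℝ))
    (hVb : β * n / 5 ≤ (Vb.card : ℝ)) :
    ∃ k : ℕ, (k : ℝ) ≤ 300 / β + 1 ∧ ∃ f : Fin (k + 1) → V,
      Function.Injective f ∧ f 0 ∈ Va ∧ f (Fin.last k) ∈ Vb ∧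
      ∀ i : Fin k, (f i.castSucc, f i.succ) ∈ E := by
  obtain rfl : Nat.card V = n := Nat.card_eq_fintype_card.trans hn
  obtain ⟨p, hp, hinj, hhead, hlast⟩ :=
    short_path_between_large_sets_general (R := (E : SetRel V V)) (A := Va) (B := Vb)
      (by positivity) (expandsBetween_of_finset hout) (expandsBetween_of_finset hin)
      (by rwa [Set.ncard_coe_finset]) (by rwa [Set.ncard_coe_finset])
  refine ⟨p.length, ?_, p, hinj, hhead, hlast, p.step⟩
  have hβ : 1 ≤ 150 / β := by rw [le_div_iff₀ hβ0]; linarith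
  calc (p.length : ℝ) ≤ Nat.card V / (β * Nat.card V / 150) + 2 := hp
    _ = 150 / β + 2 := by field_simp
    _ ≤ 2 * (150 / β) + 1 := by linarith
    _ = 300 / β + 1 := by ring
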